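/- Let a_0(n) = 2 and a_1(n) = −3 for all n (so that D_n^{M,1} reproduces e_0 and e_1). There exists a constant C > 0, independent of n, x and g, such that for every twice continuously differentiable g on [0,1], every n ≥ 1, and every x ∈ [0,1], |D_n^{M,1}(g; x) − g(x) − (1/2) D_n^{M,1}((t − x)^2; x) g″(x)| ≤ C (1/n) ω(g″; 1/√n), where ω denotes the first-order modulus of continuity on [0,1]. -/

import Mathlib

open Filter Topology

/-- Bernstein basis polynomial `p_{n,k}(x)`, zero when `k < 0` or `k > n`. -/
noncomputable def bern (n : ℕ) (k : ℤ) (x : ℝ) : ℝ :=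
  if 0 ≤ k ∧ k ≤ (n : ℤ) then (n.choose k.toNat : ℝ) * x ^ k.toNat * (1 - x) ^ (n - k.toNat)
  else 0

/-- Modified Bernstein basis `p_{n,k}^{M,1}(x)` of Khosravian-Arab et al. -/
noncomputable def pM1 (a0 a1 : ℕ → ℝ) (n : ℕ) (k : ℤ) (x : ℝ) : ℝ :=
  (a1 n * x + a0 n) * bern (n - 1) k x + (a1 n * (1 - x) + a0 n) * bern (n - 1) (k - 1) x

/-- First-order modified Durrmeyer operator `D_n^{M,1}(f;x)`. -/
noncomputable def DM1 (a0 a1 : ℕ → ℝ) (n : ℕ) (f : ℝ → ℝ) (x : ℝ) : ℝ :=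
  ((n : ℝ) + 1) * ∑ k ∈ Finset.range (n + 1),
    pM1 a0 a1 n k x * ∫ t in (0:ℝ)..1, bern n k t * f t

/-- First-order modulus of continuity of `f` on `[0,1]`. -/
noncomputable def omega1 (f : ℝ → ℝ) (δ : ℝ) : ℝ :=
  sSup {v | ∃ t ∈ Set.Icc (0:ℝ) 1, ∃ s ∈ Set.Icc (0:ℝ) 1, |t - s| ≤ δ ∧ v = |f t - f s|}

/-!
The remainder of the second order Taylor polynomial of `g` at `x` is at most
`(1 + n (t - x)²) (t - x)² ω(g''; 1/√n)`, hence at most `ω(g''; 1/√n)` times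
`1/n + 2 n (t - x)⁴`, so it suffices to bound the fourth central moment of the operator by
`O(1/n²)`. That moment is a binomial average of Beta moments, and both come from the equation
`X (1 - X) p' = (k - n X) p` for `p = p_{n,k}`. Summed over `k`, it expresses each binomial central
moment through the two before it. Integrated against a test function (Stein's identity), it
gives a three-term recurrence for the Beta moments about `x`, by which the fourth one is
`O(((k - n x)⁴ + n²) / n⁴)`.
-/

section BernsteinPolynomial

open Polynomial

variable (R : Type*) [CommRing R] (n : ℕ)

theorem X_mul_one_sub_X_mul_derivative_bernsteinPolynomial (k : ℕ) :
    X * (1 - X) * derivative (bernsteinPolynomial R n k) =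
      ((k : R[X]) - (n : R[X]) * X) * bernsteinPolynomial R n k := by
  have mul_pow_pred (P : R[X]) (j : ℕ) : P * ((j : R[X]) * P ^ (j - 1)) = j * P ^ j := by
    cases j with
    | zero => simp
    | succ j => rw [Nat.add_sub_cancel, pow_succ]; ring
  rcases lt_or_ge n k with hnk | hkn
  · simp [bernsteinPolynomial.eq_zero_of_lt R hnk]
  · obtain ⟨j, rfl⟩ := Nat.exists_eq_add_of_le hkn
    have hX := mul_pow_pred X k
    have hX' := mul_pow_pred (1 - X) j
    simp only [bernsteinPolynomial, Nat.add_sub_cancel_left, derivative_mul,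
      derivative_natCast, derivative_pow, derivative_sub, derivative_one, derivative_X, map_natCast]
    push_cast
    linear_combination
      ((k + j).choose k : R[X]) * (1 - X) ^ (j + 1) * hX -
        ((k + j).choose k : R[X]) * X ^ (k + 1) * hX'

/-- The `m`-th central moment `∑ k, p_{n,k} (k - n X) ^ m` of the binomial distribution, as a
polynomial in the success probability `X`. -/
noncomputable def bernsteinCentralMoment (m : ℕ) : R[X] :=
  ∑ k ∈ Finset.range (n + 1), bernsteinPolynomial R n k * ((k : R[X]) - (n : R[X]) * X) ^ m

theorem bernsteinCentralMoment_zero : bernsteinCentralMoment R n 0 = 1 := by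
  simp [bernsteinCentralMoment, bernsteinPolynomial.sum]

theorem bernsteinCentralMoment_succ (m : ℕ) :
    bernsteinCentralMoment R n (m + 1) =
      X * (1 - X) *
        (derivative (bernsteinCentralMoment R n m) +
          (m * n : R[X]) * bernsteinCentralMoment R n (m - 1)) := by
  simp only [bernsteinCentralMoment, derivative_sum, Finset.mul_sum,
    ← Finset.sum_add_distrib]
  refine Finset.sum_congr rfl fun k _ => ?_
  simp only [derivative_mul, derivative_pow, derivative_sub,
    derivative_natCast, derivative_X, map_natCast]
  linear_combination -((k : R[X]) - (n : R[X]) * X) ^ m *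
    X_mul_one_sub_X_mul_derivative_bernsteinPolynomial R n k

theorem bernsteinCentralMoment_one : bernsteinCentralMoment R n 1 = 0 := by
  simp [bernsteinCentralMoment_succ R n 0, bernsteinCentralMoment_zero]

theorem bernsteinCentralMoment_four :
    bernsteinCentralMoment R n 4 =
      (n : R[X]) * (X * (1 - X)) *
        (1 + 3 * ((n : R[X]) - 2) * (X * (1 - X))) := by
  have second : bernsteinCentralMoment R n 2 = (n : R[X]) * (X * (1 - X)) := by
    rw [bernsteinCentralMoment_succ R n 1, bernsteinCentralMoment_one, bernsteinCentralMoment_zero]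
    simp only [derivative_zero]
    push_cast
    ring
  have third : bernsteinCentralMoment R n 3 =
      (n : R[X]) * (X * (1 - X) * (1 - 2 * X)) := by
    rw [bernsteinCentralMoment_succ R n 2, second, bernsteinCentralMoment_one]
    simp only [derivative_mul, derivative_natCast, derivative_X, derivative_sub, derivative_one]
    push_cast
    ring
  rw [bernsteinCentralMoment_succ R n 3, third, second]
  simp only [derivative_mul, derivative_natCast, derivative_X, derivative_sub, derivative_one,
    derivative_ofNat]
  push_cast
  ring

end BernsteinPolynomial

theorem bern_natCast (n k : ℕ) (x : ℝ) : bern n k x = (bernsteinPolynomial ℝ n k).eval x := by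
  rcases lt_or_ge n k with hnk | hkn
  · simp [bern, bernsteinPolynomial, hnk.not_ge, Nat.choose_eq_zero_of_lt hnk]
  · simp [bern, bernsteinPolynomial, hkn]

theorem bern_nonneg (n : ℕ) (k : ℤ) {x : ℝ} (hx : x ∈ Set.Icc (0 : ℝ) 1) : 0 ≤ bern n k x := by
  have hx₀ := hx.1
  have hx₁ := sub_nonneg.2 hx.2
  unfold bern
  split_ifs <;> positivity

theorem continuous_bern (n k : ℕ) : Continuous (bern n k) := by
  simpa only [funext (bern_natCast n k)] using (bernsteinPolynomial ℝ n k).continuous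

theorem sum_bern (n : ℕ) (x : ℝ) : ∑ k ∈ Finset.range (n + 1), bern n k x = 1 := by
  simpa [Polynomial.eval_finsetSum, bern_natCast] using
    congrArg (Polynomial.eval x) (bernsteinPolynomial.sum ℝ n)

theorem sum_bern_mul_sub_pow (n m : ℕ) (x : ℝ) :
    ∑ k ∈ Finset.range (n + 1), bern n k x * (k - n * x) ^ m =
      (bernsteinCentralMoment ℝ n m).eval x := by
  simp [bernsteinCentralMoment, Polynomial.eval_finsetSum, bern_natCast]

theorem sum_bern_mul_sub (n : ℕ) (x : ℝ) :
    ∑ k ∈ Finset.range (n + 1), bern n k x * (k - n * x) = 0 := by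
  simpa [bernsteinCentralMoment_one] using sum_bern_mul_sub_pow n 1 x

theorem sum_bern_mul_sub_pow_four_le (n : ℕ) {x : ℝ} (hx : x ∈ Set.Icc (0 : ℝ) 1) :
    ∑ k ∈ Finset.range (n + 1), bern n k x * (k - n * x) ^ 4 ≤ n ^ 2 := by
  have hq₀ : 0 ≤ x * (1 - x) := mul_nonneg hx.1 (sub_nonneg.2 hx.2)
  have hq₁ : x * (1 - x) ≤ 1 / 4 := by nlinarith [sq_nonneg (x - 1 / 2)]
  have hn : (n : ℝ) ≤ n ^ 2 := by exact_mod_cast Nat.le_self_pow two_ne_zero n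
  rw [sum_bern_mul_sub_pow, bernsteinCentralMoment_four]
  simp only [Polynomial.eval_mul, Polynomial.eval_natCast, Polynomial.eval_X, Polynomial.eval_sub,
    Polynomial.eval_one, Polynomial.eval_add, Polynomial.eval_ofNat]
  generalize x * (1 - x) = q at hq₀ hq₁
  calc
    n * q * (1 + 3 * (n - 2) * q) = n * q + 3 * n ^ 2 * q ^ 2 - 6 * (n * q ^ 2) := by ring
    _ ≤ n * q + 3 * n ^ 2 * q ^ 2 := sub_le_self _ (by positivity)
    _ ≤ n ^ 2 * (1 / 4) + 3 * n ^ 2 * (1 / 4) ^ 2 := by gcongr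
    _ ≤ n ^ 2 := by nlinarith

theorem integral_derivative_bernsteinPolynomial (n k : ℕ) :
    ∫ t in (0 : ℝ)..1, (Polynomial.derivative (bernsteinPolynomial ℝ n k)).eval t =
      (if k = n then 1 else 0) - if k = 0 then 1 else 0 := by
  rw [intervalIntegral.integral_eq_sub_of_hasDerivAt (fun t _ => Polynomial.hasDerivAt _ t)
    ((Polynomial.continuous _).intervalIntegrable _ _), bernsteinPolynomial.eval_at_0,
    bernsteinPolynomial.eval_at_1]

section DurrmeyerMean

/-- The mean `(n + 1) ∫ p_{n,k} f` of `f` for the `Beta(k + 1, n - k + 1)` distribution: the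
coefficient that the Durrmeyer operators put on the `k`-th basis function. -/
noncomputable def durrmeyerMean (n k : ℕ) (f : ℝ → ℝ) : ℝ :=
  (n + 1) * ∫ t in (0 : ℝ)..1, bern n k t * f t

variable {n k : ℕ} {f g : ℝ → ℝ}

theorem intervalIntegrable_bern_mul (hf : IntervalIntegrable f MeasureTheory.volume 0 1) :
    IntervalIntegrable (fun t => bern n k t * f t) MeasureTheory.volume 0 1 :=
  hf.continuousOn_mul (continuous_bern n k).continuousOn

theorem durrmeyerMean_add (hf : IntervalIntegrable f MeasureTheory.volume 0 1)
    (hg : IntervalIntegrable g MeasureTheory.volume 0 1) :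
    durrmeyerMean n k (fun t => f t + g t) = durrmeyerMean n k f + durrmeyerMean n k g := by
  simp only [durrmeyerMean, mul_add (bern n k _)]
  rw [intervalIntegral.integral_add (intervalIntegrable_bern_mul hf)
    (intervalIntegrable_bern_mul hg), mul_add]

theorem durrmeyerMean_const_mul (c : ℝ) :
    durrmeyerMean n k (fun t => c * f t) = c * durrmeyerMean n k f := by
  simp only [durrmeyerMean, mul_left_comm _ c, intervalIntegral.integral_const_mul]

theorem durrmeyerMean_sub (hf : IntervalIntegrable f MeasureTheory.volume 0 1)
    (hg : IntervalIntegrable g MeasureTheory.volume 0 1) :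
    durrmeyerMean n k (fun t => f t - g t) = durrmeyerMean n k f - durrmeyerMean n k g := by
  simp only [durrmeyerMean, mul_sub (bern n k _)]
  rw [intervalIntegral.integral_sub (intervalIntegrable_bern_mul hf)
    (intervalIntegrable_bern_mul hg), mul_sub]

theorem abs_durrmeyerMean_le (hg : IntervalIntegrable g MeasureTheory.volume 0 1)
    (hfg : ∀ t ∈ Set.Icc (0 : ℝ) 1, |f t| ≤ g t) :
    |durrmeyerMean n k f| ≤ durrmeyerMean n k g := by
  have pointwise (t : ℝ) (ht : t ∈ Set.Icc (0 : ℝ) 1) :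
      ‖bern n k t * f t‖ ≤ bern n k t * g t := by
    rw [norm_mul, Real.norm_of_nonneg (bern_nonneg n k ht)]
    exact mul_le_mul_of_nonneg_left (hfg t ht) (bern_nonneg n k ht)
  rw [durrmeyerMean, abs_mul, abs_of_pos (by positivity)]
  refine mul_le_mul_of_nonneg_left ?_ (by positivity)
  exact intervalIntegral.norm_integral_le_of_norm_le zero_le_one
    (.of_forall fun t ht => pointwise t (Set.Ioc_subset_Icc_self ht))
    (intervalIntegrable_bern_mul hg)

theorem durrmeyerMean_one (hk : k ≤ n) : durrmeyerMean n k (fun _ => 1) = 1 := by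
  simp only [durrmeyerMean, mul_one, bern_natCast]
  induction k with
  | zero =>
    have base := integral_derivative_bernsteinPolynomial (n + 1) 0
    simp only [bernsteinPolynomial.derivative_zero, Polynomial.eval_mul, Polynomial.eval_neg,
      Polynomial.eval_natCast, intervalIntegral.integral_const_mul, Nat.add_sub_cancel,
      if_neg n.succ_ne_zero.symm, if_true] at base
    push_cast at base
    linarith
  | succ k ih =>
    have step := integral_derivative_bernsteinPolynomial (n + 1) (k + 1)
    simp only [bernsteinPolynomial.derivative_succ, Polynomial.eval_mul, Polynomial.eval_sub,
      Polynomial.eval_natCast, intervalIntegral.integral_const_mul, Nat.add_sub_cancel,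
      if_neg k.succ_ne_zero, if_neg (show k + 1 ≠ n + 1 by omega)] at step
    rw [intervalIntegral.integral_sub ((Polynomial.continuous _).intervalIntegrable _ _)
      ((Polynomial.continuous _).intervalIntegrable _ _)] at step
    push_cast at step
    linarith [ih (by omega)]

theorem durrmeyerMean_stein (n k : ℕ) {f' : ℝ → ℝ} (hf : ∀ t, HasDerivAt f (f' t) t)
    (hf' : Continuous f') :
    durrmeyerMean n k (fun t => (k + 1 - (n + 2) * t) * f t + t * (1 - t) * f' t) = 0 := by
  have hfc : Continuous f := continuous_iff_continuousAt.2 fun t => (hf t).continuousAt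
  have hbc := continuous_bern n k
  have hderiv (t : ℝ) : HasDerivAt (fun t => t * (1 - t) * (bern n k t * f t))
      (bern n k t * ((k + 1 - (n + 2) * t) * f t + t * (1 - t) * f' t)) t := by
    have ode := congrArg (Polynomial.eval t)
      (X_mul_one_sub_X_mul_derivative_bernsteinPolynomial ℝ n k)
    simp only [Polynomial.eval_mul, Polynomial.eval_sub, Polynomial.eval_X, Polynomial.eval_one,
      Polynomial.eval_natCast] at ode
    simp only [bern_natCast]
    refine (((hasDerivAt_id t).mul ((hasDerivAt_id t).const_sub 1)).mul
      (((bernsteinPolynomial ℝ n k).hasDerivAt t).mul (hf t))).congr_deriv ?_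
    simp only [Pi.mul_apply, id]
    linear_combination f t * ode
  rw [durrmeyerMean, intervalIntegral.integral_eq_sub_of_hasDerivAt (fun t _ => hderiv t)
    (Continuous.intervalIntegrable (by fun_prop) _ _)]
  simp

theorem durrmeyerMean_sub_pow_succ (n k m : ℕ) (x : ℝ) :
    (n + 2 + m) * durrmeyerMean n k (fun t => (t - x) ^ (m + 1)) =
      (k - n * x + (m + 1) * (1 - 2 * x)) * durrmeyerMean n k (fun t => (t - x) ^ m) +
        m * (x * (1 - x)) * durrmeyerMean n k (fun t => (t - x) ^ (m - 1)) := by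
  have stein := durrmeyerMean_stein n k (f := fun t => (t - x) ^ m)
    (f' := fun t => m * (t - x) ^ (m - 1))
    (fun t => by simpa using ((hasDerivAt_id t).sub_const x).fun_pow m) (by fun_prop)
  have integrand (t : ℝ) :
      (k + 1 - (n + 2) * t) * (t - x) ^ m + t * (1 - t) * (m * (t - x) ^ (m - 1)) =
        ((k - n * x + (m + 1) * (1 - 2 * x)) * (t - x) ^ m +
          m * (x * (1 - x)) * (t - x) ^ (m - 1)) - (n + 2 + m) * (t - x) ^ (m + 1) := by
    cases m with
    | zero => push_cast; ring
    | succ m => rw [Nat.add_sub_cancel]; push_cast; ring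
  simp only [integrand] at stein
  rw [durrmeyerMean_sub, durrmeyerMean_add, durrmeyerMean_const_mul, durrmeyerMean_const_mul,
    durrmeyerMean_const_mul, sub_eq_zero] at stein
  · exact stein.symm
  all_goals exact Continuous.intervalIntegrable (by fun_prop) _ _

theorem durrmeyerMean_sub_const (hk : k ≤ n) (x : ℝ) :
    durrmeyerMean n k (fun t => t - x) = (k - n * x + (1 - 2 * x)) / (n + 2) := by
  have h := durrmeyerMean_sub_pow_succ n k 0 x
  simp only [pow_zero, zero_add, pow_one, durrmeyerMean_one hk] at h
  rw [eq_div_iff (by positivity)]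
  push_cast at h
  linarith

theorem abs_add_mul_one_sub_two_mul_le {x m : ℝ} (hx : x ∈ Set.Icc (0 : ℝ) 1) (hm : 0 ≤ m)
    (c : ℝ) : |c + m * (1 - 2 * x)| ≤ |c| + m := by
  have hx' : |1 - 2 * x| ≤ 1 := abs_le.2 ⟨by linarith [hx.2], by linarith [hx.1]⟩
  calc
    |c + m * (1 - 2 * x)| ≤ |c| + m * |1 - 2 * x| := by
      simpa [abs_mul, abs_of_nonneg hm] using abs_add_le c (m * (1 - 2 * x))
    _ ≤ |c| + m := by gcongr; exact mul_le_of_le_one_right hm hx'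

theorem add_two_mul_abs_durrmeyerMean_sub_pow_add_two_le (n k m : ℕ) {x : ℝ}
    (hx : x ∈ Set.Icc (0 : ℝ) 1) :
    (n + 2) * |durrmeyerMean n k (fun t => (t - x) ^ (m + 2))| ≤
      (|k - n * x| + (m + 2)) * |durrmeyerMean n k (fun t => (t - x) ^ (m + 1))| +
        (m + 1) * (x * (1 - x)) * |durrmeyerMean n k (fun t => (t - x) ^ m)| := by
  have hq : 0 ≤ x * (1 - x) := mul_nonneg hx.1 (sub_nonneg.2 hx.2)
  have recurrence := durrmeyerMean_sub_pow_succ n k (m + 1) x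
  rw [Nat.add_sub_cancel] at recurrence
  push_cast at recurrence
  calc
    (n + 2) * |durrmeyerMean n k (fun t => (t - x) ^ (m + 2))| ≤
        (n + 2 + (m + 1)) * |durrmeyerMean n k (fun t => (t - x) ^ (m + 2))| :=
      mul_le_mul_of_nonneg_right (le_add_of_nonneg_right (by positivity)) (abs_nonneg _)
    _ = |(k - n * x + (m + 2) * (1 - 2 * x)) * durrmeyerMean n k (fun t => (t - x) ^ (m + 1)) +
          (m + 1) * (x * (1 - x)) * durrmeyerMean n k (fun t => (t - x) ^ m)| := by
      rw [← abs_of_pos (by positivity : (0 : ℝ) < n + 2 + (m + 1)), ← abs_mul]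
      congr 1
      linear_combination recurrence
    _ ≤ |k - n * x + (m + 2) * (1 - 2 * x)| * |durrmeyerMean n k (fun t => (t - x) ^ (m + 1))| +
          (m + 1) * (x * (1 - x)) * |durrmeyerMean n k (fun t => (t - x) ^ m)| := by
      refine (abs_add_le _ _).trans_eq ?_
      rw [abs_mul, abs_mul _ (durrmeyerMean n k _),
        abs_of_nonneg (by positivity : 0 ≤ (m + 1) * (x * (1 - x)))]
    _ ≤ (|k - n * x| + (m + 2)) * |durrmeyerMean n k (fun t => (t - x) ^ (m + 1))| +
          (m + 1) * (x * (1 - x)) * |durrmeyerMean n k (fun t => (t - x) ^ m)| := by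
      gcongr
      exact abs_add_mul_one_sub_two_mul_le hx (by positivity) _

theorem abs_durrmeyerMean_sub_pow_le (hk : k ≤ n) {x ρ : ℝ} (hx : x ∈ Set.Icc (0 : ℝ) 1)
    (hρ : x * (1 - x) ≤ (n + 2) * ρ ^ 2) (m : ℕ) (hm : |k - n * x| + m ≤ (n + 2) * ρ) :
    |durrmeyerMean n k (fun t => (t - x) ^ m)| ≤ m.factorial * ρ ^ m := by
  have hN : (0 : ℝ) < n + 2 := by positivity
  have hρ₀ : 0 ≤ ρ :=
    nonneg_of_mul_nonneg_right ((by positivity : (0 : ℝ) ≤ |k - n * x| + m).trans hm) hN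
  induction m using Nat.twoStepInduction with
  | zero => simp [durrmeyerMean_one hk]
  | one =>
    simp only [pow_one, durrmeyerMean_sub_const hk, abs_div, abs_of_pos hN, Nat.factorial_one,
      Nat.cast_one, one_mul] at hm ⊢
    rw [div_le_iff₀' hN]
    simpa using (abs_add_mul_one_sub_two_mul_le hx zero_le_one (k - n * x)).trans hm
  | more m ih₀ ih₁ =>
    push_cast at hm ih₁
    specialize ih₀ (by linarith)
    specialize ih₁ (by linarith)
    have hfact : ((m + 1).factorial : ℝ) = (m + 1) * m.factorial := by
      exact_mod_cast m.factorial_succ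
    refine le_of_mul_le_mul_left ?_ hN
    calc
      (n + 2) * |durrmeyerMean n k (fun t => (t - x) ^ (m + 2))| ≤
          (|k - n * x| + (m + 2)) * |durrmeyerMean n k (fun t => (t - x) ^ (m + 1))| +
            (m + 1) * (x * (1 - x)) * |durrmeyerMean n k (fun t => (t - x) ^ m)| :=
        add_two_mul_abs_durrmeyerMean_sub_pow_add_two_le n k m hx
      _ ≤ (n + 2) * ρ * ((m + 1).factorial * ρ ^ (m + 1)) +
            (m + 1) * ((n + 2) * ρ ^ 2) * (m.factorial * ρ ^ m) := by
        gcongr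
      _ = (n + 2) * (2 * (m + 1).factorial * ρ ^ (m + 2)) := by
        rw [hfact]
        ring
      _ ≤ (n + 2) * ((m + 2).factorial * ρ ^ (m + 2)) := by
        rw [Nat.factorial_succ (m + 1)]
        push_cast
        gcongr
        linarith [(m.cast_nonneg : (0 : ℝ) ≤ m)]

theorem durrmeyerMean_sub_pow_four_le (hk : k ≤ n) {x : ℝ} (hx : x ∈ Set.Icc (0 : ℝ) 1) :
    durrmeyerMean n k (fun t => (t - x) ^ 4) ≤
      192 * ((k - n * x) ^ 4 + 81 * (n + 2) ^ 2) / (n + 2) ^ 4 := by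
  have hq : x * (1 - x) ≤ 1 / 4 := by nlinarith [sq_nonneg (x - 1 / 2)]
  have hs : √(n + 2 : ℝ) ^ 2 = n + 2 := Real.sq_sqrt (by positivity)
  have hs₄ : 4 / 3 ≤ √(n + 2 : ℝ) :=
    Real.le_sqrt_of_sq_le (by linarith [(n.cast_nonneg : (0 : ℝ) ≤ n)])
  -- The term `3 √(n + 2)` absorbs both the standard deviation and the additive constant `m = 4`.
  set ρ : ℝ := (|k - n * x| + 3 * √(n + 2 : ℝ)) / (n + 2) with hρ_def
  have hρ : (n + 2) * ρ = |k - n * x| + 3 * √(n + 2 : ℝ) := by rw [hρ_def]; field_simp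
  have variance : x * (1 - x) ≤ (n + 2) * ρ ^ 2 := by
    refine le_of_mul_le_mul_left ?_ (by positivity : (0 : ℝ) < n + 2)
    calc
      (n + 2) * (x * (1 - x)) ≤ (n + 2) * 9 := by gcongr; linarith
      _ = (3 * √(n + 2 : ℝ)) ^ 2 := by rw [mul_pow, hs]; ring
      _ ≤ (|k - n * x| + 3 * √(n + 2 : ℝ)) ^ 2 := by gcongr; linarith [abs_nonneg (k - n * x)]
      _ = (n + 2) * ((n + 2) * ρ ^ 2) := by rw [← hρ]; ring
  calc
    durrmeyerMean n k (fun t => (t - x) ^ 4) ≤ Nat.factorial 4 * ρ ^ 4 :=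
      (le_abs_self _).trans
        (abs_durrmeyerMean_sub_pow_le hk hx variance 4 (by push_cast; linarith))
    _ ≤ 24 * ((2 ^ 3 * (|k - n * x| ^ 4 + (3 * √(n + 2 : ℝ)) ^ 4)) / (n + 2) ^ 4) := by
      rw [hρ_def, div_pow, show ((Nat.factorial 4 : ℕ) : ℝ) = 24 by norm_num [Nat.factorial]]
      gcongr
      exact add_pow_le (abs_nonneg _) (by positivity) 4
    _ = 192 * ((k - n * x) ^ 4 + 81 * (n + 2) ^ 2) / (n + 2) ^ 4 := by
      rw [show (3 * √(n + 2 : ℝ)) ^ 4 = 81 * (√(n + 2 : ℝ) ^ 2) ^ 2 by ring, hs,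
        (by decide : Even 4).pow_abs]
      ring

theorem durrmeyerMean_sub_pow_four_le_of_abs_sub_le_one (hk : k ≤ n) {x c : ℝ}
    (hx : x ∈ Set.Icc (0 : ℝ) 1) (hc : |k - n * x - c| ≤ 1) :
    durrmeyerMean n k (fun t => (t - x) ^ 4) ≤
      192 * (8 * c ^ 4 + 89 * (n + 2) ^ 2) / (n + 2) ^ 4 := by
  have pow_le : (k - n * x) ^ 4 ≤ 8 * (c ^ 4 + 1) := by
    calc
      (k - n * x) ^ 4 = (c + (k - n * x - c)) ^ 4 := by ring
      _ ≤ 2 ^ 3 * (c ^ 4 + |k - n * x - c| ^ 4) := by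
        rw [(by decide : Even 4).pow_abs]
        exact (by decide : Even 4).add_pow_le
      _ ≤ 2 ^ 3 * (c ^ 4 + 1) := by
        gcongr
        exact pow_le_one₀ (abs_nonneg _) hc
      _ = 8 * (c ^ 4 + 1) := by norm_num
  have one_le : 1 ≤ (n + 2 : ℝ) ^ 2 :=
    one_le_pow₀ (by linarith [(n.cast_nonneg : (0 : ℝ) ≤ n)])
  refine (durrmeyerMean_sub_pow_four_le hk hx).trans ?_
  refine div_le_div_of_nonneg_right (mul_le_mul_of_nonneg_left ?_ (by norm_num)) (by positivity)
  linarith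

end DurrmeyerMean

section ModifiedOperator

variable (a0 a1 : ℕ → ℝ) (n : ℕ) {f g : ℝ → ℝ} (x : ℝ)

theorem DM1_eq_sum_pM1_mul_durrmeyerMean (f : ℝ → ℝ) :
    DM1 a0 a1 n f x = ∑ k ∈ Finset.range (n + 1), pM1 a0 a1 n k x * durrmeyerMean n k f := by
  simp only [DM1, durrmeyerMean, Finset.mul_sum, mul_left_comm]

theorem DM1_sub (hf : IntervalIntegrable f MeasureTheory.volume 0 1)
    (hg : IntervalIntegrable g MeasureTheory.volume 0 1) :
    DM1 a0 a1 n (fun t => f t - g t) x = DM1 a0 a1 n f x - DM1 a0 a1 n g x := by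
  simp only [DM1_eq_sum_pM1_mul_durrmeyerMean, durrmeyerMean_sub hf hg, mul_sub,
    Finset.sum_sub_distrib]

theorem DM1_add (hf : IntervalIntegrable f MeasureTheory.volume 0 1)
    (hg : IntervalIntegrable g MeasureTheory.volume 0 1) :
    DM1 a0 a1 n (fun t => f t + g t) x = DM1 a0 a1 n f x + DM1 a0 a1 n g x := by
  simp only [DM1_eq_sum_pM1_mul_durrmeyerMean, durrmeyerMean_add hf hg, mul_add,
    Finset.sum_add_distrib]

theorem DM1_const_mul (c : ℝ) (f : ℝ → ℝ) :
    DM1 a0 a1 n (fun t => c * f t) x = c * DM1 a0 a1 n f x := by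
  simp only [DM1_eq_sum_pM1_mul_durrmeyerMean, durrmeyerMean_const_mul, Finset.mul_sum,
    mul_left_comm]

theorem sum_pM1_succ_mul (F : ℕ → ℝ) :
    ∑ k ∈ Finset.range (n + 2), pM1 a0 a1 (n + 1) k x * F k =
      ∑ k ∈ Finset.range (n + 1), bern n k x *
        ((a1 (n + 1) * x + a0 (n + 1)) * F k +
          (a1 (n + 1) * (1 - x) + a0 (n + 1)) * F (k + 1)) := by
  have last : bern n (n + 1 : ℕ) x = 0 := by simp [bern]
  have first : bern n ((0 : ℕ) - 1) x = 0 := by simp [bern]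
  have shift (k : ℕ) : bern n ((k + 1 : ℕ) - 1) x = bern n k x := by simp
  simp only [pM1, Nat.add_sub_cancel, add_mul _ _ (F _), Finset.sum_add_distrib]
  rw [Finset.sum_range_succ _ (n + 1), Finset.sum_range_succ' _ (n + 1), last, first]
  simp only [shift, mul_zero, zero_mul, add_zero, ← Finset.sum_add_distrib]
  exact Finset.sum_congr rfl fun k _ => by ring

theorem DM1_succ (f : ℝ → ℝ) :
    DM1 a0 a1 (n + 1) f x = ∑ k ∈ Finset.range (n + 1), bern n k x *
      ((a1 (n + 1) * x + a0 (n + 1)) * durrmeyerMean (n + 1) k f +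
        (a1 (n + 1) * (1 - x) + a0 (n + 1)) * durrmeyerMean (n + 1) (k + 1) f) := by
  rw [DM1_eq_sum_pM1_mul_durrmeyerMean, sum_pM1_succ_mul]

theorem DM1_succ_one :
    DM1 a0 a1 (n + 1) (fun _ => 1) x = a1 (n + 1) + 2 * a0 (n + 1) := by
  calc
    DM1 a0 a1 (n + 1) (fun _ => 1) x =
        ∑ k ∈ Finset.range (n + 1), bern n k x * (a1 (n + 1) + 2 * a0 (n + 1)) := by
      rw [DM1_succ]
      refine Finset.sum_congr rfl fun k hk => ?_
      rw [durrmeyerMean_one (by grind), durrmeyerMean_one (by grind)]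
      ring
    _ = a1 (n + 1) + 2 * a0 (n + 1) := by rw [← Finset.sum_mul, sum_bern, one_mul]

theorem DM1_succ_sub_const :
    DM1 a0 a1 (n + 1) (fun t => t - x) x =
      ((a1 (n + 1) + 2 * a0 (n + 1)) * (1 - 3 * x) + a1 (n + 1) * (1 - x) + a0 (n + 1)) /
        (n + 3) := by
  set s := a1 (n + 1) + 2 * a0 (n + 1)
  set d := s * (1 - 3 * x) + a1 (n + 1) * (1 - x) + a0 (n + 1)
  calc
    DM1 a0 a1 (n + 1) (fun t => t - x) x =
        ∑ k ∈ Finset.range (n + 1),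
          (s * (bern n k x * (k - n * x)) + d * bern n k x) / (n + 3) := by
      rw [DM1_succ]
      refine Finset.sum_congr rfl fun k hk => ?_
      rw [durrmeyerMean_sub_const (by grind), durrmeyerMean_sub_const (by grind)]
      push_cast
      field_simp
      ring
    _ = d / (n + 3) := by
      rw [← Finset.sum_div, Finset.sum_add_distrib, ← Finset.mul_sum, ← Finset.mul_sum,
        sum_bern_mul_sub, sum_bern]
      ring

variable {x}

-- The majorant `a0 = 1`, `a1 = 0` is the positive operator whose basis functions are
-- `p_{n-1,k} + p_{n-1,k-1}`.
theorem abs_DM1_succ_le {A : ℝ} (hA : ∀ y ∈ Set.Icc (0 : ℝ) 1, |a1 (n + 1) * y + a0 (n + 1)| ≤ A)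
    (hg : IntervalIntegrable g MeasureTheory.volume 0 1)
    (hfg : ∀ t ∈ Set.Icc (0 : ℝ) 1, |f t| ≤ g t) (hx : x ∈ Set.Icc (0 : ℝ) 1) :
    |DM1 a0 a1 (n + 1) f x| ≤ A * DM1 (fun _ => 1) (fun _ => 0) (n + 1) g x := by
  have hA₀ : 0 ≤ A := (abs_nonneg _).trans (hA x hx)
  have hx' : 1 - x ∈ Set.Icc (0 : ℝ) 1 := ⟨sub_nonneg.2 hx.2, sub_le_self _ hx.1⟩
  simp only [DM1_succ, Finset.mul_sum]
  refine (Finset.abs_sum_le_sum_abs _ _).trans (Finset.sum_le_sum fun k _ => ?_)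
  have mean_le (j : ℕ) := abs_durrmeyerMean_le (n := n + 1) (k := j) hg hfg
  rw [abs_mul, abs_of_nonneg (bern_nonneg n k hx), mul_left_comm A]
  refine mul_le_mul_of_nonneg_left ((abs_add_le _ _).trans ?_) (bern_nonneg n k hx)
  rw [abs_mul, abs_mul, zero_mul, zero_mul, zero_add, one_mul, one_mul, mul_add]
  gcongr
  exacts [hA x hx, mean_le k, hA _ hx', mean_le (k + 1)]

theorem DM1_one_zero_sub_pow_four_le (hx : x ∈ Set.Icc (0 : ℝ) 1) :
    DM1 (fun _ => 1) (fun _ => 0) (n + 1) (fun t => (t - x) ^ 4) x ≤ 40000 / (n + 1) ^ 2 := by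
  calc
    DM1 (fun _ => 1) (fun _ => 0) (n + 1) (fun t => (t - x) ^ 4) x ≤
        ∑ k ∈ Finset.range (n + 1), bern n k x *
          (2 * (192 * (8 * (k - n * x) ^ 4 + 89 * (n + 3) ^ 2) / (n + 3) ^ 4)) := by
      rw [DM1_succ]
      refine Finset.sum_le_sum fun k hk => mul_le_mul_of_nonneg_left ?_ (bern_nonneg n k hx)
      rw [zero_mul, zero_mul, zero_add, one_mul, one_mul, two_mul]
      have mean_le (j : ℕ) (hj : j ≤ n + 1) (hjk : |j - (n + 1 : ℕ) * x - (k - n * x)| ≤ 1) :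
          durrmeyerMean (n + 1) j (fun t => (t - x) ^ 4) ≤
            192 * (8 * (k - n * x) ^ 4 + 89 * (n + 3) ^ 2) / (n + 3) ^ 4 := by
        convert durrmeyerMean_sub_pow_four_le_of_abs_sub_le_one hj hx hjk using 3 <;> grind
      refine add_le_add (mean_le k (by grind) ?_) (mean_le (k + 1) (by grind) ?_) <;>
        · push_cast
          exact abs_le.2 ⟨by linarith [hx.2], by linarith [hx.1]⟩
    _ = 384 * (8 * (∑ k ∈ Finset.range (n + 1), bern n k x * (k - n * x) ^ 4) +
          89 * (n + 3) ^ 2 * ∑ k ∈ Finset.range (n + 1), bern n k x) / (n + 3) ^ 4 := by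
      simp only [Finset.mul_sum, Finset.sum_div, ← Finset.sum_add_distrib]
      exact Finset.sum_congr rfl fun k _ => by ring
    _ ≤ 384 * (8 * (n + 3) ^ 2 + 89 * (n + 3) ^ 2 * 1) / (n + 3) ^ 4 := by
      rw [sum_bern]
      gcongr
      exact (sum_bern_mul_sub_pow_four_le n hx).trans (by gcongr; linarith)
    _ = 37248 / (n + 3) ^ 2 := by field_simp; norm_num
    _ ≤ 40000 / (n + 1) ^ 2 := by gcongr <;> norm_num

theorem DM1_one_zero_add_mul_sub_pow_four_le (hx : x ∈ Set.Icc (0 : ℝ) 1) (c : ℝ) {d : ℝ}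
    (hd : 0 ≤ d) :
    DM1 (fun _ => 1) (fun _ => 0) (n + 1) (fun t => c + d * (t - x) ^ 4) x ≤
      2 * c + d * (40000 / (n + 1) ^ 2) := by
  calc
    DM1 (fun _ => 1) (fun _ => 0) (n + 1) (fun t => c + d * (t - x) ^ 4) x =
        DM1 (fun _ => 1) (fun _ => 0) (n + 1) (fun t => c * 1 + d * (t - x) ^ 4) x := by
      simp only [mul_one]
    _ = 2 * c + d * DM1 (fun _ => 1) (fun _ => 0) (n + 1) (fun t => (t - x) ^ 4) x := by
      rw [DM1_add _ _ _ _ (Continuous.intervalIntegrable (by fun_prop) _ _)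
        (Continuous.intervalIntegrable (by fun_prop) _ _), DM1_const_mul, DM1_const_mul,
        DM1_succ_one]
      ring
    _ ≤ 2 * c + d * (40000 / (n + 1) ^ 2) := by
      gcongr
      exact DM1_one_zero_sub_pow_four_le n hx

end ModifiedOperator

section ModulusOfContinuity

variable {h : ℝ → ℝ} {δ t s : ℝ}

theorem omega1_nonneg (h : ℝ → ℝ) (δ : ℝ) : 0 ≤ omega1 h δ :=
  Real.sSup_nonneg (by rintro _ ⟨t, -, s, -, -, rfl⟩; exact abs_nonneg _)

theorem abs_sub_le_omega1 (hb : Bornology.IsBounded (h '' Set.Icc 0 1))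
    (ht : t ∈ Set.Icc (0 : ℝ) 1) (hs : s ∈ Set.Icc (0 : ℝ) 1) (hts : |t - s| ≤ δ) :
    |h t - h s| ≤ omega1 h δ := by
  refine le_csSup ⟨Metric.diam (h '' Set.Icc 0 1), ?_⟩ ⟨t, ht, s, hs, hts, rfl⟩
  rintro _ ⟨u, hu, v, hv, -, rfl⟩
  exact Metric.dist_le_diam_of_mem hb (Set.mem_image_of_mem h hu) (Set.mem_image_of_mem h hv)

theorem abs_sub_le_nat_mul_omega1 (hb : Bornology.IsBounded (h '' Set.Icc 0 1))
    (ht : t ∈ Set.Icc (0 : ℝ) 1) (hs : s ∈ Set.Icc (0 : ℝ) 1) {N : ℕ} (hts : |t - s| ≤ N * δ) :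
    |h t - h s| ≤ N * omega1 h δ := by
  rcases N.eq_zero_or_pos with rfl | hN
  · have : t = s := by simpa [sub_eq_zero] using hts
    simp [this]
  have hN' : (0 : ℝ) < N := by exact_mod_cast hN
  set u : ℕ → ℝ := fun i => AffineMap.lineMap t s (i / N : ℝ)
  have hu (i : ℕ) (hi : i ≤ N) : u i ∈ Set.Icc (0 : ℝ) 1 :=
    (convex_Icc 0 1).lineMap_mem ht hs
      ⟨by positivity, div_le_one_of_le₀ (by exact_mod_cast hi) hN'.le⟩
  have step (i : ℕ) (hi : i < N) : dist (h (u i)) (h (u (i + 1))) ≤ omega1 h δ := by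
    refine abs_sub_le_omega1 hb (hu i hi.le) (hu (i + 1) hi) ?_
    have : u i - u (i + 1) = (t - s) / N := by
      simp only [u, AffineMap.lineMap_apply_ring']
      push_cast
      field_simp
      ring
    rw [this, abs_div, abs_of_pos hN', div_le_iff₀' hN']
    exact hts
  simpa [u, hN'.ne', Real.dist_eq] using
    dist_le_range_sum_of_dist_le (f := fun i => h (u i)) N (fun hk => step _ hk)

theorem abs_sub_le_one_add_sq_mul_omega1 (hb : Bornology.IsBounded (h '' Set.Icc 0 1))
    (hδ : 0 < δ) (ht : t ∈ Set.Icc (0 : ℝ) 1) (hs : s ∈ Set.Icc (0 : ℝ) 1) :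
    |h t - h s| ≤ (1 + ((t - s) / δ) ^ 2) * omega1 h δ := by
  set l := |t - s| / δ
  have hl : 0 ≤ l := by positivity
  have hts : |t - s| ≤ ⌈l⌉₊ * δ := (div_le_iff₀ hδ).1 (Nat.le_ceil l)
  have ceil_le : (⌈l⌉₊ : ℝ) ≤ 1 + l ^ 2 := by
    rcases le_total l 1 with hl₁ | hl₁
    · have : (⌈l⌉₊ : ℝ) ≤ 1 := by exact_mod_cast Nat.ceil_le.2 (by simpa using hl₁)
      linarith [sq_nonneg l]
    · nlinarith [Nat.ceil_lt_add_one hl]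
  have hl_sq : l ^ 2 = ((t - s) / δ) ^ 2 := by rw [div_pow, sq_abs, ← div_pow]
  calc
    |h t - h s| ≤ ⌈l⌉₊ * omega1 h δ := abs_sub_le_nat_mul_omega1 hb ht hs hts
    _ ≤ (1 + ((t - s) / δ) ^ 2) * omega1 h δ := by
      rw [← hl_sq]
      exact mul_le_mul_of_nonneg_right ceil_le (omega1_nonneg h δ)

end ModulusOfContinuity

section Taylor

variable {E : Type*} [NormedAddCommGroup E] [NormedSpace ℝ E]
  {S : Set ℝ} {g g' g'' : ℝ → E} {x t K : ℝ} {a : E}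

theorem norm_sub_taylor_one_le (hS : S.OrdConnected)
    (hg : ∀ s ∈ S, HasDerivWithinAt g (g' s) S s) (hx : x ∈ S) (ht : t ∈ S)
    (hK : ∀ s ∈ Set.uIcc x t, ‖g' s - a‖ ≤ K) :
    ‖g t - g x - (t - x) • a‖ ≤ K * |t - x| := by
  have hsub : Set.uIcc x t ⊆ S := hS.uIcc_subset hx ht
  have hderiv (y : ℝ) (hy : y ∈ Set.uIcc x t) : HasDerivWithinAt
      (fun s => g s - g x - (s - x) • a) (g' y - a) (Set.uIcc x t) y := by
    simpa using (((hg y (hsub hy)).mono hsub).sub_const (g x)).fun_sub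
      (((hasDerivWithinAt_id y _).sub_const x).smul_const a)
  simpa using (convex_uIcc x t).norm_image_sub_le_of_norm_hasDerivWithin_le
    hderiv hK Set.left_mem_uIcc Set.right_mem_uIcc

theorem norm_sub_taylor_two_le (hS : S.OrdConnected)
    (hg : ∀ s ∈ S, HasDerivWithinAt g (g' s) S s)
    (hg' : ∀ s ∈ S, HasDerivWithinAt g' (g'' s) S s) (hx : x ∈ S) (ht : t ∈ S)
    (hK : ∀ s ∈ Set.uIcc x t, ‖g'' s - a‖ ≤ K) :
    ‖g t - g x - (t - x) • g' x - ((1 / 2) * (t - x) ^ 2) • a‖ ≤ K * (t - x) ^ 2 := by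
  have hsub : Set.uIcc x t ⊆ S := hS.uIcc_subset hx ht
  have hK₀ : 0 ≤ K := (norm_nonneg _).trans (hK x Set.left_mem_uIcc)
  have hderiv (y : ℝ) (hy : y ∈ Set.uIcc x t) : HasDerivWithinAt
      (fun s => g s - g x - (s - x) • g' x - ((1 / 2) * (s - x) ^ 2) • a)
      (g' y - g' x - (y - x) • a) (Set.uIcc x t) y := by
    have hid := (hasDerivWithinAt_id y (Set.uIcc x t)).sub_const x
    refine ((((hg y (hsub hy)).mono hsub).sub_const (g x)).fun_sub (hid.smul_const (g' x))
      |>.fun_sub (((hid.fun_pow 2).const_mul (1 / 2)).smul_const a)).congr_deriv ?_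
    simp
  have deriv_le (y : ℝ) (hy : y ∈ Set.uIcc x t) :
      ‖g' y - g' x - (y - x) • a‖ ≤ K * |t - x| :=
    (norm_sub_taylor_one_le hS hg' hx (hsub hy)
      fun s hs => hK s (Set.uIcc_subset_uIcc_left hy hs)).trans
      (mul_le_mul_of_nonneg_left (Set.abs_sub_left_of_mem_uIcc hy) hK₀)
  have mean_value := (convex_uIcc x t).norm_image_sub_le_of_norm_hasDerivWithin_le
    hderiv deriv_le Set.left_mem_uIcc Set.right_mem_uIcc
  rw [mul_assoc, Real.norm_eq_abs, abs_mul_abs_self, ← sq] at mean_value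
  simpa using mean_value

end Taylor

theorem abs_sub_taylor_two_le_omega1 {g g' g'' : ℝ → ℝ}
    (hg : ∀ y ∈ Set.Icc (0 : ℝ) 1, HasDerivWithinAt g (g' y) (Set.Icc 0 1) y)
    (hg' : ∀ y ∈ Set.Icc (0 : ℝ) 1, HasDerivWithinAt g' (g'' y) (Set.Icc 0 1) y)
    (hb : Bornology.IsBounded (g'' '' Set.Icc 0 1)) {x t δ : ℝ} (hδ : 0 < δ)
    (hx : x ∈ Set.Icc (0 : ℝ) 1) (ht : t ∈ Set.Icc (0 : ℝ) 1) :
    |g t - g x - (t - x) * g' x - (1 / 2) * (t - x) ^ 2 * g'' x| ≤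
      omega1 g'' δ * (δ ^ 2 + 2 * (t - x) ^ 4 / δ ^ 2) := by
  have oscillation (s : ℝ) (hs : s ∈ Set.uIcc x t) :
      ‖g'' s - g'' x‖ ≤ (1 + ((t - x) / δ) ^ 2) * omega1 g'' δ := by
    refine (abs_sub_le_one_add_sq_mul_omega1 hb hδ (Set.uIcc_subset_Icc hx ht hs) hx).trans ?_
    refine mul_le_mul_of_nonneg_right ?_ (omega1_nonneg g'' δ)
    rw [div_pow, div_pow]
    gcongr 1 + ?_ / _
    exact sq_le_sq.2 (Set.abs_sub_left_of_mem_uIcc hs)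
  -- AM-GM trades the second power, whose mean is not estimated, for the fourth.
  have am_gm : (t - x) ^ 2 ≤ δ ^ 2 + (t - x) ^ 4 / δ ^ 2 := by
    have : 0 ≤ (δ - (t - x) ^ 2 / δ) ^ 2 + (t - x) ^ 2 := by positivity
    have expand : (δ - (t - x) ^ 2 / δ) ^ 2 = δ ^ 2 - 2 * (t - x) ^ 2 + (t - x) ^ 4 / δ ^ 2 := by
      field_simp
      ring
    linarith
  calc
    |g t - g x - (t - x) * g' x - (1 / 2) * (t - x) ^ 2 * g'' x| ≤
        (1 + ((t - x) / δ) ^ 2) * omega1 g'' δ * (t - x) ^ 2 := by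
      simpa using norm_sub_taylor_two_le Set.ordConnected_Icc hg hg' hx ht oscillation
    _ = omega1 g'' δ * ((t - x) ^ 2 + (t - x) ^ 4 / δ ^ 2) := by field_simp
    _ ≤ omega1 g'' δ * (δ ^ 2 + 2 * (t - x) ^ 4 / δ ^ 2) := by
      refine mul_le_mul_of_nonneg_left ?_ (omega1_nonneg g'' δ)
      linarith [mul_div_assoc 2 ((t - x) ^ 4) (δ ^ 2)]

theorem DM1_sub_taylor_two (a0 a1 : ℕ → ℝ) (n : ℕ) {g : ℝ → ℝ}
    (hg : IntervalIntegrable g MeasureTheory.volume 0 1) (x b₀ b₁ b₂ : ℝ) :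
    DM1 a0 a1 n (fun t => g t - b₀ - (t - x) * b₁ - (1 / 2) * (t - x) ^ 2 * b₂) x =
      DM1 a0 a1 n g x - DM1 a0 a1 n (fun _ => 1) x * b₀ - DM1 a0 a1 n (fun t => t - x) x * b₁ -
        1 / 2 * DM1 a0 a1 n (fun t => (t - x) ^ 2) x * b₂ := by
  have h₀ : IntervalIntegrable (fun _ : ℝ => b₀ * 1) MeasureTheory.volume 0 1 :=
    Continuous.intervalIntegrable (by fun_prop) _ _
  have h₁ : IntervalIntegrable (fun t => b₁ * (t - x)) MeasureTheory.volume 0 1 :=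
    Continuous.intervalIntegrable (by fun_prop) _ _
  have h₂ : IntervalIntegrable (fun t => (1 / 2 * b₂) * (t - x) ^ 2) MeasureTheory.volume 0 1 :=
    Continuous.intervalIntegrable (by fun_prop) _ _
  calc
    DM1 a0 a1 n (fun t => g t - b₀ - (t - x) * b₁ - (1 / 2) * (t - x) ^ 2 * b₂) x =
        DM1 a0 a1 n (fun t => g t - b₀ * 1 - b₁ * (t - x) - (1 / 2 * b₂) * (t - x) ^ 2) x :=
      congrArg (DM1 a0 a1 n · x) (funext fun t => by ring)
    _ = _ := by
      rw [DM1_sub _ _ _ _ ((hg.sub h₀).sub h₁) h₂, DM1_sub _ _ _ _ (hg.sub h₀) h₁,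
        DM1_sub _ _ _ _ hg h₀, DM1_const_mul, DM1_const_mul, DM1_const_mul]
      ring

theorem DM1_quantitative_voronovskaja_general (a0 a1 : ℕ → ℝ) {n : ℕ} (hn : 1 ≤ n) {A : ℝ}
    (hA : ∀ y ∈ Set.Icc (0 : ℝ) 1, |a1 n * y + a0 n| ≤ A) {g g' g'' : ℝ → ℝ}
    (hg : ∀ y ∈ Set.Icc (0 : ℝ) 1, HasDerivWithinAt g (g' y) (Set.Icc 0 1) y)
    (hg' : ∀ y ∈ Set.Icc (0 : ℝ) 1, HasDerivWithinAt g' (g'' y) (Set.Icc 0 1) y)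
    (hb : Bornology.IsBounded (g'' '' Set.Icc 0 1)) {x : ℝ} (hx : x ∈ Set.Icc (0 : ℝ) 1) :
    |DM1 a0 a1 n g x - DM1 a0 a1 n (fun _ => 1) x * g x - DM1 a0 a1 n (fun t => t - x) x * g' x
        - 1 / 2 * DM1 a0 a1 n (fun t => (t - x) ^ 2) x * g'' x| ≤
      10 ^ 5 * A * (1 / (n : ℝ)) * omega1 g'' (1 / Real.sqrt n) := by
  set ω := omega1 g'' (1 / √n)
  have hn₀ : (0 : ℝ) < n := by exact_mod_cast hn
  have hω : 0 ≤ ω := omega1_nonneg _ _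
  have hA₀ : 0 ≤ A := (abs_nonneg _).trans (hA x hx)
  have hg_cont : ContinuousOn g (Set.uIcc 0 1) := by
    rw [Set.uIcc_of_le zero_le_one]
    exact fun y hy => (hg y hy).continuousWithinAt
  have hδ : (1 / √n) ^ 2 = 1 / (n : ℝ) := by rw [div_pow, one_pow, Real.sq_sqrt hn₀.le]
  have remainder_le (t : ℝ) (ht : t ∈ Set.Icc (0 : ℝ) 1) :
      |g t - g x - (t - x) * g' x - (1 / 2) * (t - x) ^ 2 * g'' x| ≤
        ω * (1 / n) + ω * (2 * n) * (t - x) ^ 4 := by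
    refine (abs_sub_taylor_two_le_omega1 hg hg' hb (δ := 1 / √n) (by positivity) hx ht).trans_eq ?_
    rw [hδ]
    field_simp
    ring
  rw [← DM1_sub_taylor_two a0 a1 n hg_cont.intervalIntegrable]
  obtain ⟨m, rfl⟩ := Nat.exists_eq_add_of_le' hn
  calc
    |DM1 a0 a1 (m + 1) _ x| ≤ A * DM1 (fun _ => 1) (fun _ => 0) (m + 1)
        (fun t => ω * (1 / (m + 1 : ℕ)) + ω * (2 * (m + 1 : ℕ)) * (t - x) ^ 4) x :=
      abs_DM1_succ_le a0 a1 m hA (Continuous.intervalIntegrable (by fun_prop) _ _) remainder_le hx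
    _ ≤ A * (2 * (ω * (1 / (m + 1 : ℕ))) + ω * (2 * (m + 1 : ℕ)) * (40000 / (m + 1) ^ 2)) := by
      gcongr
      exact DM1_one_zero_add_mul_sub_pow_four_le m hx _ (by positivity)
    _ = 80002 * A * (1 / (m + 1 : ℕ)) * ω := by
      push_cast
      field_simp
      ring
    _ ≤ 10 ^ 5 * A * (1 / (m + 1 : ℕ)) * ω := by
      gcongr
      norm_num

theorem DM1_two_neg_three_one {n : ℕ} (hn : 1 ≤ n) (x : ℝ) :
    DM1 (fun _ => 2) (fun _ => -3) n (fun _ => 1) x = 1 := by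
  obtain ⟨m, rfl⟩ := Nat.exists_eq_add_of_le' hn
  rw [DM1_succ_one]
  norm_num

theorem DM1_two_neg_three_sub_const {n : ℕ} (hn : 1 ≤ n) (x : ℝ) :
    DM1 (fun _ => 2) (fun _ => -3) n (fun t => t - x) x = 0 := by
  obtain ⟨m, rfl⟩ := Nat.exists_eq_add_of_le' hn
  rw [DM1_succ_sub_const]
  ring

theorem DM1_quantitative_voronovskaja :
    ∃ C > (0:ℝ), ∀ g g' g'' : ℝ → ℝ,
      (∀ y ∈ Set.Icc (0:ℝ) 1, HasDerivWithinAt g (g' y) (Set.Icc 0 1) y) →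
      (∀ y ∈ Set.Icc (0:ℝ) 1, HasDerivWithinAt g' (g'' y) (Set.Icc 0 1) y) →
      ContinuousOn g'' (Set.Icc 0 1) →
      ∀ n : ℕ, 1 ≤ n → ∀ x ∈ Set.Icc (0:ℝ) 1,
        |DM1 (fun _ => 2) (fun _ => -3) n g x - g x
            - 1 / 2 * DM1 (fun _ => 2) (fun _ => -3) n (fun t => (t - x) ^ 2) x * g'' x|
          ≤ C * (1 / (n : ℝ)) * omega1 g'' (1 / Real.sqrt n) := by
  refine ⟨10 ^ 5 * 2, by norm_num, fun g g' g'' hg hg' hc n hn x hx => ?_⟩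
  simpa only [DM1_two_neg_three_one hn, DM1_two_neg_three_sub_const hn, one_mul, zero_mul,
    sub_zero] using DM1_quantitative_voronovskaja_general (fun _ => 2) (fun _ => -3) hn (A := 2)
      (fun y hy => abs_le.2 ⟨by linarith [hy.2], by linarith [hy.1]⟩) hg hg'
      (isCompact_Icc.image_of_continuousOn hc).isBounded hx
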